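/- Let F : ℝ^d × ℝ^{d̃} → ℝ be convex differentiable and μ_f-strongly convex (μ_f > 0), let A_i ∈ ℝ^{m×d_i}, 𝐀 = diag(A₁,…,Aₙ), W ∈ ℝ^{n×n} a gossip matrix, 𝐖 = W ⊗ I_m, and let q : ℝ^d × ℝ^{d̃} → ℝ be convex differentiable. Let L_A ≥ max_i σ_max²(A_i), μ_A ≤ σ_min+²(𝐀) with μ_A > 0, μ_W = λ_min+(W)², and fix b ∈ (ℝ^m)^n, r > 0. Suppose α² = (μ_A + L_A)/μ_W and 0 < ε ≤ 4r²μ_A/μ_f. Define G(x, y, x̃) = F(x, x̃) + (r²/ε)(‖𝐀x + α𝐖y − b‖² + q(x, x̃)). Then G is (μ_f/2)-strongly convex on {(x, y, x̃) : y ∈ L_m^⊥}, i.e., for all x, x', x̃, x̃' and all y, y' ∈ L_m^⊥, the Bregman divergence of G satisfies D_G(x', y', x̃'; x, y, x̃) ≥ (μ_f/4)(‖x' − x‖² + ‖y' − y‖² + ‖x̃' − x̃‖²). -/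

import Mathlib

/-!
The Bregman divergence is additive, so that of `G` is
`D_F + (r²/ε) (‖𝐀 Δx + α 𝐖 Δy‖² + D_q)`: the least-squares term is quadratic, and its divergence
is its homogeneous part (`bregman_sqnorm`). Strong convexity gives
`D_F ≥ (μ_f/2)(‖Δx‖² + ‖Δx̃‖²)`, and `D_q ≥ 0` (`convex_tangent_le`). Half of the
`‖Δx‖²` term is spare, so, as `r²/ε ≥ μ_f/(4 μ_A)`, it is enough that
`μ_A ‖Δy‖² ≤ ‖𝐀 Δx + α 𝐖 Δy‖² + μ_A ‖Δx‖²`.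

This is Young's inequality (`young_aux`) for `u = 𝐀 Δx`, `v = α 𝐖 Δy`, given
`‖𝐀 Δx‖² ≤ L_A ‖Δx‖²` (`sqnorm_blockDiagA_le`) and, on `L_m^⊥`,
`‖α 𝐖 Δy‖² ≥ α² μ_W ‖Δy‖² = (μ_A + L_A) ‖Δy‖²` (`sqnorm_kronW_ge`).
-/

open Matrix
open scoped BigOperators

noncomputable section

/-- Squared Euclidean norm of a vector. -/
def sqnorm {ι : Type*} [Fintype ι] (v : ι → ℝ) : ℝ := ∑ i, (v i) ^ 2

/-- Squared largest singular value of a real matrix. -/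
def sigmaMaxSq {ι κ : Type*} [Fintype ι] [Fintype κ] (M : Matrix ι κ ℝ) : ℝ :=
  sSup {r : ℝ | ∃ x : κ → ℝ, sqnorm x = 1 ∧ r = sqnorm (M.mulVec x)}

/-- Squared smallest positive singular value of a real matrix
(infimum of `‖Mx‖²` over unit vectors orthogonal to `ker M`). -/
def sigmaMinPosSq {ι κ : Type*} [Fintype ι] [Fintype κ] (M : Matrix ι κ ℝ) : ℝ :=
  sInf {r : ℝ | ∃ x : κ → ℝ,
    (∀ y : κ → ℝ, M.mulVec y = 0 → x ⬝ᵥ y = 0) ∧ sqnorm x = 1 ∧ r = sqnorm (M.mulVec x)}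

/-- Largest eigenvalue of a symmetric real matrix (Rayleigh quotient form). -/
def lamMax {ι : Type*} [Fintype ι] (M : Matrix ι ι ℝ) : ℝ :=
  sSup {r : ℝ | ∃ x : ι → ℝ, sqnorm x = 1 ∧ r = x ⬝ᵥ M.mulVec x}

/-- Smallest positive eigenvalue of a symmetric PSD real matrix (Rayleigh quotient
over unit vectors orthogonal to the kernel). -/
def lamMinPos {ι : Type*} [Fintype ι] (M : Matrix ι ι ℝ) : ℝ :=
  sInf {r : ℝ | ∃ x : ι → ℝ,
    (∀ y : ι → ℝ, M.mulVec y = 0 → x ⬝ᵥ y = 0) ∧ sqnorm x = 1 ∧ r = x ⬝ᵥ M.mulVec x}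

/-- Block-diagonal matrix `diag(A₁,…,Aₙ)` with row blocks of equal size `m`,
as a matrix from `ℝ^d = Σᵢ ℝ^{dᵢ}` to `(ℝ^m)^n`. -/
def blockDiagA {n m : ℕ} {d : Fin n → ℕ} (A : ∀ i, Matrix (Fin m) (Fin (d i)) ℝ) :
    Matrix (Fin n × Fin m) ((i : Fin n) × Fin (d i)) ℝ :=
  Matrix.of fun p q => if p.1 = q.1 then A q.1 p.2 q.2 else 0

/-- Horizontal concatenation `(A₁ ⋯ Aₙ)`. -/
def hcat {n m : ℕ} {d : Fin n → ℕ} (A : ∀ i, Matrix (Fin m) (Fin (d i)) ℝ) :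
    Matrix (Fin m) ((i : Fin n) × Fin (d i)) ℝ :=
  Matrix.of fun r q => A q.1 r q.2

/-- Kronecker product `W ⊗ I_m`, acting on `(ℝ^m)^n`. -/
def kronW (m : ℕ) {n : ℕ} (W : Matrix (Fin n) (Fin n) ℝ) :
    Matrix (Fin n × Fin m) (Fin n × Fin m) ℝ :=
  Matrix.of fun p q => W p.1 q.1 * (if p.2 = q.2 then 1 else 0)

/-- Kronecker product `I_n ⊗ C`. -/
def kronIdC (n : ℕ) {p d : ℕ} (C : Matrix (Fin p) (Fin d) ℝ) :
    Matrix (Fin n × Fin p) (Fin n × Fin d) ℝ :=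
  Matrix.of fun pq q => (if pq.1 = q.1 then (1 : ℝ) else 0) * C pq.2 q.2

/-- The orthogonal projector of `(ℝ^m)^n` onto the consensus subspace
`L_m = {(y₁,…,yₙ) : y₁ = ⋯ = yₙ}` (each block is replaced by the average). -/
def consensusProj (n m : ℕ) : Matrix (Fin n × Fin m) (Fin n × Fin m) ℝ :=
  Matrix.of fun p q => (if p.2 = q.2 then (1 : ℝ) else 0) / n

theorem sqnorm_nonneg' {ι : Type*} [Fintype ι] (v : ι → ℝ) : 0 ≤ sqnorm v :=
  Finset.sum_nonneg fun _ _ => sq_nonneg _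

theorem sqnorm_smul {ι : Type*} [Fintype ι] (c : ℝ) (v : ι → ℝ) :
    sqnorm (c • v) = c ^ 2 * sqnorm v := by
  simp [sqnorm, mul_pow, Finset.mul_sum]

theorem sqnorm_add {ι : Type*} [Fintype ι] (u v : ι → ℝ) :
    sqnorm (u + v) = sqnorm u + 2 * (u ⬝ᵥ v) + sqnorm v := by
  simp only [sqnorm, dotProduct, Finset.mul_sum, ← Finset.sum_add_distrib, Pi.add_apply]
  exact Finset.sum_congr rfl fun _ _ => by ring

theorem sqnorm_eq_zero {ι : Type*} [Fintype ι] {v : ι → ℝ} (h : sqnorm v = 0) : v = 0 := by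
  funext i
  have := (Finset.sum_eq_zero_iff_of_nonneg (fun i _ => sq_nonneg (v i))).1 h i (Finset.mem_univ i)
  simpa using this

theorem dot_sq_le {ι : Type*} [Fintype ι] (u v : ι → ℝ) :
    (u ⬝ᵥ v) ^ 2 ≤ sqnorm u * sqnorm v :=
  Finset.sum_mul_sq_le_sq_mul_sq _ _ _

theorem exists_unit {ι : Type*} [Fintype ι] {v : ι → ℝ} (h : v ≠ 0) :
    ∃ c : ℝ, c ^ 2 * sqnorm v = 1 ∧ sqnorm (c • v) = 1 := by
  have hpos : 0 < sqnorm v :=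
    lt_of_le_of_ne (sqnorm_nonneg' v) fun h0 => h (sqnorm_eq_zero h0.symm)
  have hc : (Real.sqrt (sqnorm v))⁻¹ ^ 2 * sqnorm v = 1 := by
    rw [inv_pow, Real.sq_sqrt hpos.le, inv_mul_cancel₀ hpos.ne']
  exact ⟨(Real.sqrt (sqnorm v))⁻¹, hc, by rw [sqnorm_smul, hc]⟩

/-- By Cauchy–Schwarz on each row, the Frobenius norm bounds the operator norm; hence the set
whose supremum defines `sigmaMaxSq` is bounded above and the supremum is not a junk value. -/
theorem sqnorm_mulVec_le_frobenius {ι κ : Type*} [Fintype ι] [Fintype κ] (M : Matrix ι κ ℝ)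
    (x : κ → ℝ) : sqnorm (M.mulVec x) ≤ (∑ i, sqnorm (M i)) * sqnorm x := by
  rw [Finset.sum_mul]
  exact Finset.sum_le_sum fun i _ => dot_sq_le (M i) x

theorem sqnorm_mulVec_le {ι κ : Type*} [Fintype ι] [Fintype κ] (M : Matrix ι κ ℝ)
    (x : κ → ℝ) : sqnorm (M.mulVec x) ≤ sigmaMaxSq M * sqnorm x := by
  by_cases hx : x = 0
  · subst hx; simp [sqnorm]
  obtain ⟨c, hc, hu⟩ := exists_unit hx
  have hb : BddAbove {r : ℝ | ∃ x : κ → ℝ, sqnorm x = 1 ∧ r = sqnorm (M.mulVec x)} := by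
    refine ⟨∑ i, sqnorm (M i), ?_⟩
    rintro _ ⟨x, h1, rfl⟩
    simpa [h1] using sqnorm_mulVec_le_frobenius M x
  have h := le_csSup hb ⟨c • x, hu, rfl⟩
  rw [Matrix.mulVec_smul, sqnorm_smul] at h
  have h2 := mul_le_mul_of_nonneg_right h (sqnorm_nonneg' x)
  calc sqnorm (M.mulVec x) = c ^ 2 * sqnorm (M.mulVec x) * sqnorm x := by
        linear_combination (-sqnorm (M.mulVec x)) * hc
    _ ≤ _ := h2

theorem sigmaMaxSq_nonneg {ι κ : Type*} [Fintype ι] [Fintype κ] (M : Matrix ι κ ℝ) :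
    0 ≤ sigmaMaxSq M := by
  refine Real.sSup_nonneg ?_
  rintro _ ⟨x, -, rfl⟩
  exact sqnorm_nonneg' _

/-- Spectral gap of the gossip matrix: `λ_min+(W)² ‖w‖² ≤ ‖W w‖²` for `w ⟂ ker W`, since
`λ_min+(W) ‖w‖² ≤ ⟨w, W w⟩ ≤ ‖w‖ ‖W w‖`. -/
theorem lamMinPos_sq_mul_le {ι : Type*} [Fintype ι] (W : Matrix ι ι ℝ)
    (hpsd : ∀ x : ι → ℝ, 0 ≤ x ⬝ᵥ W.mulVec x) (w : ι → ℝ)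
    (hw : ∀ y : ι → ℝ, W.mulVec y = 0 → w ⬝ᵥ y = 0) :
    lamMinPos W ^ 2 * sqnorm w ≤ sqnorm (W.mulVec w) := by
  by_cases h0 : w = 0
  · subst h0; simp [sqnorm]
  obtain ⟨c, hc, hu⟩ := exists_unit h0
  have hl0 : 0 ≤ lamMinPos W := by
    refine Real.sInf_nonneg ?_
    rintro _ ⟨x, -, -, rfl⟩
    exact hpsd x
  have h : lamMinPos W ≤ (c • w) ⬝ᵥ W.mulVec (c • w) := by
    refine csInf_le ⟨0, ?_⟩ ⟨c • w, fun y hy => by rw [smul_dotProduct, hw y hy, smul_zero], hu, rfl⟩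
    rintro _ ⟨x, -, -, rfl⟩
    exact hpsd x
  have hcs := dot_sq_le (c • w) (W.mulVec (c • w))
  rw [hu, one_mul] at hcs
  have h2 : lamMinPos W ^ 2 ≤ c ^ 2 * sqnorm (W.mulVec w) := by
    rw [← sqnorm_smul, ← Matrix.mulVec_smul]
    exact (pow_le_pow_left₀ hl0 h 2).trans hcs
  calc _ ≤ c ^ 2 * sqnorm (W.mulVec w) * sqnorm w :=
        mul_le_mul_of_nonneg_right h2 (sqnorm_nonneg' w)
    _ = sqnorm (W.mulVec w) := by linear_combination sqnorm (W.mulVec w) * hc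

theorem blockDiagA_mulVec {n m : ℕ} {d : Fin n → ℕ} (A : ∀ i, Matrix (Fin m) (Fin (d i)) ℝ)
    (x : ((i : Fin n) × Fin (d i)) → ℝ) (i : Fin n) (a : Fin m) :
    (blockDiagA A).mulVec x (i, a) = (A i).mulVec (fun j => x ⟨i, j⟩) a := by
  simp only [Matrix.mulVec, dotProduct, blockDiagA, Matrix.of_apply, Fintype.sum_sigma]
  rw [Finset.sum_eq_single i]
  · simp
  · intro k _ hk
    simp [Ne.symm hk]
  · simp

theorem kronW_mulVec {n m : ℕ} (W : Matrix (Fin n) (Fin n) ℝ)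
    (y : Fin n × Fin m → ℝ) (i : Fin n) (a : Fin m) :
    (kronW m W).mulVec y (i, a) = W.mulVec (fun k => y (k, a)) i := by
  simp [Matrix.mulVec, dotProduct, kronW, Fintype.sum_prod_type]

theorem sqnorm_blockDiagA_le {n m : ℕ} {d : Fin n → ℕ} (A : ∀ i, Matrix (Fin m) (Fin (d i)) ℝ)
    (LA : ℝ) (hLA : ∀ i, sigmaMaxSq (A i) ≤ LA) (x : ((i : Fin n) × Fin (d i)) → ℝ) :
    sqnorm ((blockDiagA A).mulVec x) ≤ LA * sqnorm x := by
  have h1 : sqnorm ((blockDiagA A).mulVec x) =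
      ∑ i, sqnorm ((A i).mulVec (fun j => x ⟨i, j⟩)) := by
    simp only [sqnorm, Fintype.sum_prod_type, blockDiagA_mulVec]
  have h2 : sqnorm x = ∑ i, sqnorm (fun j => x ⟨i, j⟩) := by
    simp only [sqnorm, Fintype.sum_sigma]
  rw [h1, h2, Finset.mul_sum]
  exact Finset.sum_le_sum fun i _ => (sqnorm_mulVec_le _ _).trans
    (mul_le_mul_of_nonneg_right (hLA i) (sqnorm_nonneg' _))

/-- On `L_m^⊥` each of the `m` coordinate slices of `y` sums to zero, hence is orthogonal to
`ker W`, and the spectral gap of `W` passes to `W ⊗ I_m`. -/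
theorem sqnorm_kronW_ge {n m : ℕ} (W : Matrix (Fin n) (Fin n) ℝ)
    (hpsd : ∀ x : Fin n → ℝ, 0 ≤ x ⬝ᵥ W.mulVec x)
    (hker : ∀ x : Fin n → ℝ, W.mulVec x = 0 ↔ ∀ i j, x i = x j)
    (y : Fin n × Fin m → ℝ) (hy : ∀ a : Fin m, ∑ i, y (i, a) = 0) :
    lamMinPos W ^ 2 * sqnorm y ≤ sqnorm ((kronW m W).mulVec y) := by
  have h1 : sqnorm ((kronW m W).mulVec y) = ∑ a, sqnorm (W.mulVec (fun k => y (k, a))) := by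
    simp only [sqnorm, Fintype.sum_prod_type_right, kronW_mulVec]
  have h2 : sqnorm y = ∑ a, sqnorm (fun k => y (k, a)) := by
    simp only [sqnorm, Fintype.sum_prod_type_right]
  rw [h1, h2, Finset.mul_sum]
  refine Finset.sum_le_sum fun a _ => lamMinPos_sq_mul_le W hpsd _ fun z hz => ?_
  have hz' := (hker z).1 hz
  rcases isEmpty_or_nonempty (Fin n) with hn | ⟨⟨k⟩⟩
  · simp [dotProduct]
  · simp only [dotProduct, fun i => hz' i k]
    rw [← Finset.sum_mul, hy a, zero_mul]

/-- Young's inequality `‖u + v‖² + (a/L) ‖u‖² ≥ a/(a+L) ‖v‖²`, combined with `‖u‖² ≤ L X` and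
`(a+L) Y ≤ ‖v‖²`; this division-free form also covers `L = 0`. -/
theorem young_aux {ι : Type*} [Fintype ι] (u v : ι → ℝ) (a L X Y : ℝ) (ha : 0 < a) (hL : 0 ≤ L)
    (hX : 0 ≤ X) (hu : sqnorm u ≤ L * X) (hv : (a + L) * Y ≤ sqnorm v) :
    a * Y ≤ sqnorm (u + v) + a * X := by
  rcases hL.eq_or_lt with rfl | hL
  · have hu0 : u = 0 := sqnorm_eq_zero (le_antisymm (by simpa using hu) (sqnorm_nonneg' u))
    subst hu0
    have := mul_nonneg ha.le hX
    simp only [zero_add, add_zero] at *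
    linarith
  · -- The slack in the inequality comes from
    -- `(a+L)(L ‖u+v‖² + a ‖u‖²) - a L ‖v‖² = ‖(a+L) u + L v‖²`.
    have hsq := sqnorm_nonneg' ((a + L) • u + L • v)
    rw [sqnorm_add, sqnorm_smul, sqnorm_smul, smul_dotProduct, dotProduct_smul] at hsq
    simp only [smul_eq_mul] at hsq
    rw [sqnorm_add]
    have h1 := mul_le_mul_of_nonneg_left hu (mul_nonneg ha.le (add_pos ha hL).le)
    have h2 := mul_le_mul_of_nonneg_left hv (mul_nonneg ha.le hL.le)
    have hp : 0 < L * (a + L) := mul_pos hL (add_pos ha hL)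
    refine le_of_mul_le_mul_left ?_ hp
    nlinarith

theorem hasFDerivAt_sqnorm {ι : Type*} [Fintype ι] (w : ι → ℝ) :
    HasFDerivAt sqnorm
      (∑ i, (2 * w i) • (ContinuousLinearMap.proj i : (ι → ℝ) →L[ℝ] ℝ)) w := by
  unfold sqnorm
  refine HasFDerivAt.fun_sum fun i _ => ?_
  simpa using (hasFDerivAt_apply (𝕜 := ℝ) i w).pow 2

/-- The Bregman divergence of `z ↦ ‖M z - b‖²` is the quadratic form `‖M (z' - z)‖²`. -/
theorem bregman_sqnorm {E ι : Type*} [Fintype ι] [NormedAddCommGroup E] [NormedSpace ℝ E]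
    (M : E →L[ℝ] (ι → ℝ)) (b : ι → ℝ) (z z' : E) :
    DifferentiableAt ℝ (fun z => sqnorm (M z - b)) z ∧
    sqnorm (M z' - b) - sqnorm (M z - b) - fderiv ℝ (fun z => sqnorm (M z - b)) z (z' - z) =
      sqnorm (M (z' - z)) := by
  have h := (hasFDerivAt_sqnorm (M z - b)).comp z (M.hasFDerivAt.sub_const b)
  have h' : HasFDerivAt (fun z => sqnorm (M z - b)) _ z := h
  refine ⟨h'.differentiableAt, ?_⟩
  rw [h'.fderiv]
  simp only [sqnorm, ContinuousLinearMap.comp_apply, _root_.sum_apply,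
    _root_.smul_apply, ContinuousLinearMap.proj_apply, smul_eq_mul,
    ← Finset.sum_sub_distrib, map_sub, Pi.sub_apply]
  exact Finset.sum_congr rfl fun _ _ => by ring

/-- First-order characterisation of convexity: the tangent at `z` lies below the graph. -/
theorem convex_tangent_le {E : Type*} [NormedAddCommGroup E] [NormedSpace ℝ E] {q : E → ℝ}
    (hq : ConvexOn ℝ Set.univ q) (hd : Differentiable ℝ q) (z z' : E) :
    fderiv ℝ q z (z' - z) ≤ q z' - q z := by
  have hc : ConvexOn ℝ Set.univ (q ∘ AffineMap.lineMap (k := ℝ) z z') :=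
    hq.comp_affineMap (AffineMap.lineMap (k := ℝ) z z')
  have hder : HasDerivAt (q ∘ AffineMap.lineMap (k := ℝ) z z') (fderiv ℝ q z (z' - z)) 0 := by
    have h1 : HasDerivAt (AffineMap.lineMap (k := ℝ) z z') (z' - z) (0 : ℝ) :=
      AffineMap.hasDerivAt_lineMap
    have h2 : HasFDerivAt q (fderiv ℝ q z) (AffineMap.lineMap (k := ℝ) z z' 0) := by
      simpa using (hd z).hasFDerivAt
    exact h2.comp_hasDerivAt 0 h1
  have := hc.le_slope_of_hasDerivAt (Set.mem_univ 0) (Set.mem_univ 1) one_pos hder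
  simpa [slope_def_field] using this

/-- strong convexity of the penalized objective for mixed constraints
`G(x,y,x̃) = F(x,x̃) + (r²/ε)(‖𝐀x + α𝐖y − b‖² + q(x,x̃))` on `{(x,y,x̃) : y ∈ L_m^⊥}`. -/
theorem penalized_strong_convexity_mixed {n m dt : ℕ} (d : Fin n → ℕ)
    (F : ((((i : Fin n) × Fin (d i)) → ℝ) × ((Fin dt) → ℝ)) → ℝ)
    (hF_conv : ConvexOn ℝ Set.univ F)
    (hF_diff : Differentiable ℝ F)
    (μf : ℝ) (hμf : 0 < μf)
    -- F is μ_f-strongly convex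
    (hF_str : ∀ z z' : (((i : Fin n) × Fin (d i)) → ℝ) × ((Fin dt) → ℝ),
      F z + fderiv ℝ F z (z' - z) + μf / 2 * (sqnorm (z'.1 - z.1) + sqnorm (z'.2 - z.2)) ≤ F z')
    (A : ∀ i : Fin n, Matrix (Fin m) (Fin (d i)) ℝ)
    -- W is a gossip matrix
    (W : Matrix (Fin n) (Fin n) ℝ)
    (hW_symm : Wᵀ = W)
    (hW_psd : ∀ x : Fin n → ℝ, 0 ≤ x ⬝ᵥ W.mulVec x)
    (hW_ker : ∀ x : Fin n → ℝ, W.mulVec x = 0 ↔ ∀ i j, x i = x j)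
    -- q is convex and differentiable
    (q : ((((i : Fin n) × Fin (d i)) → ℝ) × ((Fin dt) → ℝ)) → ℝ)
    (hq_conv : ConvexOn ℝ Set.univ q)
    (hq_diff : Differentiable ℝ q)
    (LA : ℝ) (hLA : ∀ i, sigmaMaxSq (A i) ≤ LA)
    (μA : ℝ) (hμA : μA ≤ sigmaMinPosSq (blockDiagA A)) (hμA_pos : 0 < μA)
    (μW : ℝ) (hμW : μW = lamMinPos W ^ 2) (hμW_pos : 0 < μW)
    (b : Fin n × Fin m → ℝ) (r : ℝ) (hr : 0 < r)
    (α : ℝ) (hα : α ^ 2 = (μA + LA) / μW)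
    (ε : ℝ) (hε_pos : 0 < ε) (hε : ε ≤ 4 * r ^ 2 * μA / μf)
    (G : ((((i : Fin n) × Fin (d i)) → ℝ) × ((Fin n × Fin m) → ℝ) × ((Fin dt) → ℝ)) → ℝ)
    (hG : ∀ z, G z =
      F (z.1, z.2.2) + r ^ 2 / ε *
        (sqnorm ((blockDiagA A).mulVec z.1 + α • (kronW m W).mulVec z.2.1 - b)
          + q (z.1, z.2.2))) :
    ∀ (x x' : ((i : Fin n) × Fin (d i)) → ℝ) (y y' : (Fin n × Fin m) → ℝ)
      (xt xt' : (Fin dt) → ℝ),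
      -- y, y' ∈ L_m^⊥
      (∀ a : Fin m, ∑ i, y (i, a) = 0) → (∀ a : Fin m, ∑ i, y' (i, a) = 0) →
      μf / 4 * (sqnorm (x' - x) + sqnorm (y' - y) + sqnorm (xt' - xt)) ≤
        G (x', y', xt') - G (x, y, xt) -
          fderiv ℝ G (x, y, xt) (x' - x, y' - y, xt' - xt) := by
  intro x x' y y' xt xt' hy hy'
  let P : ((((i : Fin n) × Fin (d i)) → ℝ) × ((Fin n × Fin m) → ℝ) × ((Fin dt) → ℝ)) →L[ℝ]
      ((((i : Fin n) × Fin (d i)) → ℝ) × ((Fin dt) → ℝ)) :=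
    (ContinuousLinearMap.fst ℝ _ _).prod
      ((ContinuousLinearMap.snd ℝ _ _).comp (ContinuousLinearMap.snd ℝ _ _))
  let M : ((((i : Fin n) × Fin (d i)) → ℝ) × ((Fin n × Fin m) → ℝ) × ((Fin dt) → ℝ)) →L[ℝ]
      ((Fin n × Fin m) → ℝ) :=
    (LinearMap.toContinuousLinearMap (blockDiagA A).mulVecLin).comp
        (ContinuousLinearMap.fst ℝ _ _) +
      α • (LinearMap.toContinuousLinearMap (kronW m W).mulVecLin).comp
        ((ContinuousLinearMap.fst ℝ _ _).comp (ContinuousLinearMap.snd ℝ _ _))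
  have hG' : G = fun z => F (P z) + r ^ 2 / ε * (sqnorm (M z - b) + q (P z)) := by
    funext z
    exact hG z
  set z := (x, y, xt) with hz
  set z' := (x', y', xt') with hz'
  have hzz : (x' - x, y' - y, xt' - xt) = z' - z := rfl
  obtain ⟨hSd, hSb⟩ := bregman_sqnorm M b z z'
  have hFP : HasFDerivAt (fun z => F (P z)) ((fderiv ℝ F (P z)).comp P) z :=
    (hF_diff (P z)).hasFDerivAt.comp z P.hasFDerivAt
  have hqP : HasFDerivAt (fun z => q (P z)) ((fderiv ℝ q (P z)).comp P) z :=
    (hq_diff (P z)).hasFDerivAt.comp z P.hasFDerivAt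
  have hGd := hFP.fun_add ((hSd.hasFDerivAt.fun_add hqP).const_mul (r ^ 2 / ε))
  rw [hzz, hG', hGd.fderiv]
  simp only [_root_.add_apply, _root_.smul_apply, smul_eq_mul,
    ContinuousLinearMap.comp_apply]
  have hPs : P (z' - z) = P z' - P z := map_sub P z' z
  rw [hPs]
  have hFs : F (P z) + fderiv ℝ F (P z) (P z' - P z)
      + μf / 2 * (sqnorm (x' - x) + sqnorm (xt' - xt)) ≤ F (P z') := hF_str (P z) (P z')
  have hqs := convex_tangent_le hq_conv hq_diff (P z) (P z')
  have hMz : M (z' - z) =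
      (blockDiagA A).mulVec (x' - x) + α • (kronW m W).mulVec (y' - y) := rfl
  have hkey : μA * sqnorm (y' - y) ≤ sqnorm (M (z' - z)) + μA * sqnorm (x' - x) := by
    rcases isEmpty_or_nonempty (Fin n) with hn | ⟨⟨i0⟩⟩
    · -- For `n = 0` the `y`-space is trivial, and `LA` need not be nonnegative
      have h0 : sqnorm (y' - y) = 0 := by simp [sqnorm]
      rw [h0, mul_zero]
      exact add_nonneg (sqnorm_nonneg' _) (mul_nonneg hμA_pos.le (sqnorm_nonneg' _))
    · rw [hMz]
      refine young_aux _ _ μA LA _ _ hμA_pos ((sigmaMaxSq_nonneg (A i0)).trans (hLA i0))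
        (sqnorm_nonneg' _) (sqnorm_blockDiagA_le A LA hLA _) ?_
      have hdy : ∀ a : Fin m, ∑ i, (y' - y) (i, a) = 0 := fun a => by
        simp [Finset.sum_sub_distrib, hy a, hy' a]
      have hg := sqnorm_kronW_ge W hW_psd hW_ker (y' - y) hdy
      rw [← hμW] at hg
      rw [sqnorm_smul]
      have hαW : α ^ 2 * μW = μA + LA := by rw [hα, div_mul_cancel₀ _ hμW_pos.ne']
      rw [← hαW, mul_assoc]
      exact mul_le_mul_of_nonneg_left hg (sq_nonneg α)
  have hc : μf / (4 * μA) ≤ r ^ 2 / ε := by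
    rw [le_div_iff₀ hμf] at hε
    rw [div_le_div_iff₀ (by positivity) hε_pos]
    linarith
  have hSge : μf / 4 * sqnorm (y' - y) ≤
      r ^ 2 / ε * sqnorm (M (z' - z)) + μf / 4 * sqnorm (x' - x) := by
    have h1 := mul_le_mul_of_nonneg_right hc (sqnorm_nonneg' (M (z' - z)))
    have h2 := mul_le_mul_of_nonneg_left hkey
      (show 0 ≤ μf / (4 * μA) by positivity)
    have h3 : μf / (4 * μA) * μA = μf / 4 := by field_simp
    have h4 : μf / (4 * μA) * (μA * sqnorm (y' - y)) = μf / 4 * sqnorm (y' - y) := by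
      rw [← mul_assoc, h3]
    have h5 : μf / (4 * μA) * (μA * sqnorm (x' - x)) = μf / 4 * sqnorm (x' - x) := by
      rw [← mul_assoc, h3]
    rw [mul_add, h4, h5] at h2
    linarith
  have hq0 := mul_nonneg (show 0 ≤ r ^ 2 / ε by positivity) (sub_nonneg.2 hqs)
  have hxt := mul_nonneg hμf.le (sqnorm_nonneg' (xt' - xt))
  rw [← hSb] at hSge
  linarith
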